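/- Let α ∈ ℝ, let b₁, b₂, b₁* ∈ ℝ² with b₂ and b₁* unit vectors, and set b₂* := R(α) b₁*. Then ⟨b₂ − b₂*, P_{b₂} R(α) b₁⟩ ≤ −‖P_{b₂} b₂*‖² + ‖P_{b₂} b₂*‖ · ‖b₁ − b₁*‖, where P_{b₂} := I₂ − b₂ b₂ᵀ. -/

import Mathlib

open scoped RealInnerProductSpace
open Real Filter MeasureTheory

/-- The orthogonal projection `P_b v = (I₂ - b bᵀ) v = v - ⟨b, v⟩ b`. -/
noncomputable def proj (b v : EuclideanSpace ℝ (Fin 2)) : EuclideanSpace ℝ (Fin 2) :=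
  v - ⟪b, v⟫ • b

/-- The counterclockwise rotation of the plane through angle α. -/
noncomputable def rot (α : ℝ) (v : EuclideanSpace ℝ (Fin 2)) : EuclideanSpace ℝ (Fin 2) :=
  (WithLp.equiv 2 (Fin 2 → ℝ)).symm
    ![Real.cos α * v 0 - Real.sin α * v 1, Real.sin α * v 0 + Real.cos α * v 1]

/-- The unit vector at angle θ: (cos θ, sin θ). -/
noncomputable def dir (θ : ℝ) : EuclideanSpace ℝ (Fin 2) :=
  (WithLp.equiv 2 (Fin 2 → ℝ)).symm ![Real.cos θ, Real.sin θ]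

lemma norm_rot_sub_rot (α : ℝ) (v w : EuclideanSpace ℝ (Fin 2)) :
    ‖rot α v - rot α w‖ = ‖v - w‖ := by
  rw [EuclideanSpace.norm_eq, EuclideanSpace.norm_eq]
  congr 1
  simp only [rot, WithLp.equiv_symm_apply, Fin.sum_univ_two, Real.norm_eq_abs, sq_abs,
    PiLp.sub_apply, Matrix.cons_val_zero, Matrix.cons_val_one]
  linear_combination ((v 0 - w 0) ^ 2 + (v 1 - w 1) ^ 2) * Real.sin_sq_add_cos_sq α

lemma inner_sub_proj {b : EuclideanSpace ℝ (Fin 2)} (hb : ‖b‖ = 1)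
    (w x : EuclideanSpace ℝ (Fin 2)) :
    ⟪b - w, proj b x⟫ = -⟪proj b w, x⟫ := by
  simp only [proj, inner_sub_left, inner_sub_right, inner_smul_left, inner_smul_right,
    real_inner_self_eq_norm_sq, hb, real_inner_comm b w, RCLike.conj_to_real]
  ring

lemma inner_proj_self {b : EuclideanSpace ℝ (Fin 2)} (hb : ‖b‖ = 1)
    (w : EuclideanSpace ℝ (Fin 2)) :
    ⟪proj b w, w⟫ = ‖proj b w‖ ^ 2 := by
  rw [← real_inner_self_eq_norm_sq]
  simp only [proj, inner_sub_left, inner_sub_right, inner_smul_left, inner_smul_right,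
    real_inner_self_eq_norm_sq, hb, real_inner_comm b w, RCLike.conj_to_real]
  ring

/-- With b₂* = R(α)b₁*, for unit vectors b₂, b₁*:
⟨b₂ - b₂*, P_{b₂} R(α) b₁⟩ ≤ -‖P_{b₂} b₂*‖² + ‖P_{b₂} b₂*‖ ‖b₁ - b₁*‖. -/
theorem stmt8 (α : ℝ) (b1 b2 b1s : EuclideanSpace ℝ (Fin 2))
    (hb2 : ‖b2‖ = 1) (hb1s : ‖b1s‖ = 1) :
    ⟪b2 - rot α b1s, proj b2 (rot α b1)⟫ ≤
      -‖proj b2 (rot α b1s)‖ ^ 2 + ‖proj b2 (rot α b1s)‖ * ‖b1 - b1s‖ := by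
  have h := neg_le_of_abs_le
    (abs_real_inner_le_norm (proj b2 (rot α b1s)) (rot α b1 - rot α b1s))
  rw [norm_rot_sub_rot, inner_sub_right, inner_proj_self hb2] at h
  rw [inner_sub_proj hb2]
  linarith
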